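/- arXiv:2409.17267 — 4 statements merged into one kernel-verified Lean document; each statement's English description precedes it below -/
import Mathlib

section
/- Let A ∈ ℝ^{n×n} be symmetric positive definite, b ∈ ℝⁿ, and ε, V ∈ ℝ. Set s = 𝟙ᵀA⁻¹𝟙, t = bᵀA⁻¹𝟙, u = bᵀA⁻¹b, γ = V𝟙 + εb, C = ε²A + γ𝟙ᵀ + ε𝟙bᵀ, and Δ = s(V − u) + (ε + t)². Assume C is invertible, Δ ≠ 0, and ε + t ≠ 0. Then C⁻¹γ = λ·(A⁻¹𝟙/s) + (1 − λ)·(A⁻¹b/(ε + t)), where λ = s(V − u)/Δ; equivalently, C⁻¹γ = ((V − u)·A⁻¹𝟙 + (ε + t)·A⁻¹b)/Δ. -/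
open Matrix

/-!
The matrix `C` is `ε² A` plus terms of rank at most one whose columns are multiples of `γ` and `𝟙`,
so `C` maps the span of `A⁻¹𝟙` and `A⁻¹b` into the span of `𝟙` and `b`. Solving
`C (p A⁻¹𝟙 + q A⁻¹b) = γ` for the two coefficients gives `p = (V - u) / Δ` and `q = (ε + t) / Δ`.
By symmetry of `A`, `𝟙ᵀA⁻¹b = t`, and the weights on `A⁻¹𝟙 / s` and `A⁻¹b / (ε + t)` are
`λ = s p` and `1 - λ = (ε + t) q`.
-/

section RankTwo

variable {m n R : Type*} [Fintype n] [CommRing R]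

theorem smul_add_vecMulVec_add_vecMulVec_mulVec
    (A : Matrix m n R) (x y f g : n → R) (ε V : R) :
    (ε ^ 2 • A + vecMulVec (V • A *ᵥ x + ε • A *ᵥ y) f + ε • vecMulVec (A *ᵥ x) g) *ᵥ
        ((V - g ⬝ᵥ y) • x + (ε + g ⬝ᵥ x) • y) =
      (f ⬝ᵥ x * (V - g ⬝ᵥ y) + (ε + g ⬝ᵥ x) * (ε + f ⬝ᵥ y)) • (V • A *ᵥ x + ε • A *ᵥ y) := by
  simp only [add_mulVec, smul_mulVec, mulVec_add, mulVec_smul, vecMulVec_mulVec, op_smul_eq_smul]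
  module

end RankTwo

section Field

variable {K : Type*} [Field K]

theorem inv_smul_smul_add_smul_eq_smul_add_one_sub_smul {M : Type*} [AddCommGroup M] [Module K M]
    {s d r r' : K} (hs : s ≠ 0) (hr' : r' ≠ 0) (hΔ : s * d + r * r' ≠ 0) (x y : M) :
    (s * d + r * r')⁻¹ • (d • x + r • y) =
      (s * d / (s * d + r * r')) • s⁻¹ • x +
        (1 - s * d / (s * d + r * r')) • r'⁻¹ • y := by
  have one_sub_weight : 1 - s * d / (s * d + r * r') = r * r' / (s * d + r * r') := by
    rw [one_sub_div hΔ, add_sub_cancel_left]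
  rw [one_sub_weight]
  match_scalars <;> field_simp

variable {ι : Type*} [Fintype ι] [DecidableEq ι]

theorem inv_mulVec_eq_inv_smul {C : Matrix ι ι K} (hC : IsUnit C.det) {v w : ι → K} {c : K}
    (hc : c ≠ 0) (h : C *ᵥ w = c • v) : C⁻¹ *ᵥ v = c⁻¹ • w := by
  let _ := C.invertibleOfIsUnitDet hC
  apply inv_mulVec_eq_vec
  rw [mulVec_smul, h, inv_smul_smul₀ hc]

/-- In terms of second moments, `C = E[M M'ᵀ]` and `γ = E[Y M]` for `M = Y e + ε Z` and
`M' = Y f + ε Z'`, where `A = E[Z Z'ᵀ]`, `b = E[Y Z]`, `g = E[Y Z']` and `V = E[Y²]`. -/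
theorem mea_decomposition_general
    (A : Matrix ι ι K) (hA : IsUnit A.det) (e b f g : ι → K) (ε V : K)
    (s t t' u : K)
    (hs : s = f ⬝ᵥ A⁻¹ *ᵥ e) (ht : t = g ⬝ᵥ A⁻¹ *ᵥ e)
    (ht' : t' = f ⬝ᵥ A⁻¹ *ᵥ b) (hu : u = g ⬝ᵥ A⁻¹ *ᵥ b)
    (γ : ι → K) (hγ : γ = V • e + ε • b)
    (C : Matrix ι ι K) (hC : C = ε ^ 2 • A + vecMulVec γ f + ε • vecMulVec e g)
    (Δ : K) (hΔ : Δ = s * (V - u) + (ε + t) * (ε + t'))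
    (hCinv : IsUnit C.det) (hΔ0 : Δ ≠ 0) (hs0 : s ≠ 0) (hεt' : ε + t' ≠ 0)
    (lam : K) (hlam : lam = s * (V - u) / Δ) :
    C⁻¹ *ᵥ γ = lam • s⁻¹ • A⁻¹ *ᵥ e + (1 - lam) • (ε + t')⁻¹ • A⁻¹ *ᵥ b ∧
      C⁻¹ *ᵥ γ = Δ⁻¹ • ((V - u) • A⁻¹ *ᵥ e + (ε + t) • A⁻¹ *ᵥ b) := by
  have mulVec_inv_mulVec (v : ι → K) : A *ᵥ A⁻¹ *ᵥ v = v := by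
    rw [mulVec_mulVec, mul_nonsing_inv A hA, one_mulVec]
  have C_mulVec : C *ᵥ ((V - u) • A⁻¹ *ᵥ e + (ε + t) • A⁻¹ *ᵥ b) = Δ • γ := by
    simpa only [mulVec_inv_mulVec, ← hs, ← ht, ← ht', ← hu, ← hγ, ← hC, ← hΔ] using
      smul_add_vecMulVec_add_vecMulVec_mulVec A (A⁻¹ *ᵥ e) (A⁻¹ *ᵥ b) f g ε V
  have closed_form := inv_mulVec_eq_inv_smul hCinv hΔ0 C_mulVec
  refine ⟨?_, closed_form⟩
  subst hΔ hlam
  rw [closed_form, inv_smul_smul_add_smul_eq_smul_add_one_sub_smul hs0 hεt' hΔ0]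

end Field

/-- For a symmetric positive definite `A`, the minimal error
aggregation coefficients `C⁻¹γ` decompose as a combination of the minimal variance
aggregate `A⁻¹𝟙/s` and `A⁻¹b/(ε+t)`. -/
theorem mea_decomposition {n : ℕ}
    (A : Matrix (Fin n) (Fin n) ℝ) (hA : A.PosDef)
    (b : Fin n → ℝ) (ε V : ℝ)
    (s t u : ℝ)
    (hs : s = (1 : Fin n → ℝ) ⬝ᵥ A⁻¹.mulVec 1)
    (ht : t = b ⬝ᵥ A⁻¹.mulVec 1)
    (hu : u = b ⬝ᵥ A⁻¹.mulVec b)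
    (γ : Fin n → ℝ) (hγ : γ = V • (1 : Fin n → ℝ) + ε • b)
    (C : Matrix (Fin n) (Fin n) ℝ)
    (hC : C = ε ^ 2 • A + vecMulVec γ (1 : Fin n → ℝ) + ε • vecMulVec (1 : Fin n → ℝ) b)
    (Δ : ℝ) (hΔ : Δ = s * (V - u) + (ε + t) ^ 2)
    (hCinv : IsUnit C.det) (hΔ0 : Δ ≠ 0) (hεt : ε + t ≠ 0)
    (lam : ℝ) (hlam : lam = s * (V - u) / Δ) :
    C⁻¹.mulVec γ = lam • (s⁻¹ • A⁻¹.mulVec 1) + (1 - lam) • ((ε + t)⁻¹ • A⁻¹.mulVec b) ∧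
    C⁻¹.mulVec γ = Δ⁻¹ • ((V - u) • A⁻¹.mulVec 1 + (ε + t) • A⁻¹.mulVec b) := by
  rcases isEmpty_or_nonempty (Fin n) with _ | _
  · exact ⟨Subsingleton.elim _ _, Subsingleton.elim _ _⟩
  have hs0 : s ≠ 0 := hs ▸ (hA.inv.dotProduct_mulVec_pos one_ne_zero).ne'
  have ht' : t = 1 ⬝ᵥ A⁻¹ *ᵥ b := by
    rw [ht, ← dotProduct_transpose_mulVec, ← conjTranspose_eq_transpose_of_trivial,
      hA.inv.isHermitian.eq]
  exact mea_decomposition_general A (A.isUnit_iff_isUnit_det.mp hA.isUnit) 1 b 1 b ε V s t t u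
    hs ht ht' hu γ hγ C hC Δ (by rw [hΔ, sq]) hCinv hΔ0 hs0 hεt lam hlam
end

section
/- Let A ∈ ℝ^{n×n} be symmetric positive definite, b ∈ ℝⁿ, and ε, V ∈ ℝ. Set s = 𝟙ᵀA⁻¹𝟙, t = bᵀA⁻¹𝟙, u = bᵀA⁻¹b, γ = V𝟙 + εb, C = ε²A + γ𝟙ᵀ + ε𝟙bᵀ, and Δ = s(V − u) + (ε + t)². Assume C is invertible and Δ ≠ 0. Then γᵀC⁻¹γ = V − ε²(V − u)/Δ. -/
/-!
With `x = C⁻¹γ`, pairing `A⁻¹Cx = A⁻¹γ` with `𝟙` and with `b` gives two linear equations in the two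
scalars `𝟙ᵀx` and `bᵀx`, of which `γᵀx` is a linear combination. The computation is bilinear, so it
treats the row copies `e'`, `b'`, `γ'` of the column vectors `e = 𝟙`, `b`, `γ` as independent.
-/

open Matrix

section CommRing

variable {ι R : Type*} [Fintype ι] [CommRing R]

lemma dotProduct_mulVec_comm_of_isSymm {M : Matrix ι ι R} (hM : M.IsSymm) (v w : ι → R) :
    v ⬝ᵥ M *ᵥ w = w ⬝ᵥ M *ᵥ v := by
  rw [← dotProduct_transpose_mulVec, hM.eq]

variable [DecidableEq ι] {A : Matrix ι ι R}

lemma dotProduct_inv_mulVec_smul_add_vecMulVec_add_vecMulVec (hA : IsUnit A.det) (c : R)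
    (v₁ w₁ v₂ w₂ x y : ι → R) :
    y ⬝ᵥ A⁻¹ *ᵥ ((c • A + vecMulVec v₁ w₁ + vecMulVec v₂ w₂) *ᵥ x) =
      c * (y ⬝ᵥ x) + (w₁ ⬝ᵥ x) * (y ⬝ᵥ A⁻¹ *ᵥ v₁) + (w₂ ⬝ᵥ x) * (y ⬝ᵥ A⁻¹ *ᵥ v₂) := by
  have hAx : A⁻¹ *ᵥ (A *ᵥ x) = x := by
    rw [mulVec_mulVec, nonsing_inv_mul _ hA, one_mulVec]
  simp only [add_mulVec, smul_mulVec, vecMulVec_mulVec, op_smul_eq_smul, mulVec_add, mulVec_smul,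
    hAx, dotProduct_add, dotProduct_smul, smul_eq_mul]

theorem dotProduct_sub_mul_eq_of_mulVec_eq (hA : IsUnit A.det) {e e' b b' γ γ' x : ι → R}
    {ε V s t t' u : R}
    (hs : s = e' ⬝ᵥ A⁻¹ *ᵥ e) (ht : t = b' ⬝ᵥ A⁻¹ *ᵥ e)
    (ht' : t' = e' ⬝ᵥ A⁻¹ *ᵥ b) (hu : u = b' ⬝ᵥ A⁻¹ *ᵥ b)
    (hγ : γ = V • e + ε • b) (hγ' : γ' = V • e' + ε • b')
    (hx : (ε ^ 2 • A + vecMulVec γ e' + ε • vecMulVec e b') *ᵥ x = γ) :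
    (γ' ⬝ᵥ x - V) * (s * (V - u) + (ε + t) * (ε + t')) = -(ε ^ 2 * (V - u)) := by
  have pairing (y : ι → R) :
      ε ^ 2 * (y ⬝ᵥ x) + (e' ⬝ᵥ x) * (y ⬝ᵥ A⁻¹ *ᵥ γ) + ε * (b' ⬝ᵥ x) * (y ⬝ᵥ A⁻¹ *ᵥ e) =
        y ⬝ᵥ A⁻¹ *ᵥ γ := by
    have h := dotProduct_inv_mulVec_smul_add_vecMulVec_add_vecMulVec hA (ε ^ 2) γ e' e (ε • b') x y
    rw [vecMulVec_smul, hx, smul_dotProduct, smul_eq_mul] at h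
    exact h.symm
  have pairing_γ_e : e' ⬝ᵥ A⁻¹ *ᵥ γ = V * s + ε * t' := by
    simp only [hγ, hs, ht', mulVec_add, mulVec_smul, dotProduct_add, dotProduct_smul, smul_eq_mul]
  have pairing_γ_b : b' ⬝ᵥ A⁻¹ *ᵥ γ = V * t + ε * u := by
    simp only [hγ, ht, hu, mulVec_add, mulVec_smul, dotProduct_add, dotProduct_smul, smul_eq_mul]
  have γ_dot_x : γ' ⬝ᵥ x = V * (e' ⬝ᵥ x) + ε * (b' ⬝ᵥ x) := by
    simp only [hγ', add_dotProduct, smul_dotProduct, smul_eq_mul]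
  have pairing_e' := pairing e'
  have pairing_b' := pairing b'
  rw [pairing_γ_e, ← hs] at pairing_e'
  rw [pairing_γ_b, ← ht] at pairing_b'
  rw [γ_dot_x]
  -- Cramer's rule in the unknowns `e' ⬝ᵥ x - 1` and `ε * (b' ⬝ᵥ x)`, whose determinant is `ε` times
  -- the second factor on the left; cancelling this `ε` from the multipliers makes `ε = 0` harmless.
  linear_combination (V - u) * pairing_e' + (ε + t') * pairing_b'

end CommRing

theorem gamma_Cinv_gamma_general {ι K : Type*} [Fintype ι] [DecidableEq ι] [Field K]
    {A : Matrix ι ι K} (hA : IsUnit A.det) {e e' b b' γ γ' : ι → K} {ε V s t t' u : K}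
    (hs : s = e' ⬝ᵥ A⁻¹ *ᵥ e) (ht : t = b' ⬝ᵥ A⁻¹ *ᵥ e)
    (ht' : t' = e' ⬝ᵥ A⁻¹ *ᵥ b) (hu : u = b' ⬝ᵥ A⁻¹ *ᵥ b)
    (hγ : γ = V • e + ε • b) (hγ' : γ' = V • e' + ε • b')
    {C : Matrix ι ι K} (hC : C = ε ^ 2 • A + vecMulVec γ e' + ε • vecMulVec e b')
    {Δ : K} (hΔ : Δ = s * (V - u) + (ε + t) * (ε + t'))
    (hCinv : IsUnit C.det) (hΔ0 : Δ ≠ 0) :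
    γ' ⬝ᵥ C⁻¹ *ᵥ γ = V - ε ^ 2 * (V - u) / Δ := by
  have hx : C *ᵥ (C⁻¹ *ᵥ γ) = γ := by
    rw [mulVec_mulVec, mul_nonsing_inv _ hCinv, one_mulVec]
  have key : (γ' ⬝ᵥ C⁻¹ *ᵥ γ - V) * Δ = -(ε ^ 2 * (V - u)) :=
    hΔ ▸ dotProduct_sub_mul_eq_of_mulVec_eq hA hs ht ht' hu hγ hγ' (hC ▸ hx)
  rw [sub_eq_add_neg, ← neg_div, ← sub_eq_iff_eq_add', eq_div_iff hΔ0, key]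

/-- `γᵀC⁻¹γ = V − ε²(V − u)/Δ`. -/
theorem gamma_Cinv_gamma {n : ℕ}
    (A : Matrix (Fin n) (Fin n) ℝ) (hA : A.PosDef)
    (b : Fin n → ℝ) (ε V : ℝ)
    (s t u : ℝ)
    (hs : s = (1 : Fin n → ℝ) ⬝ᵥ A⁻¹.mulVec 1)
    (ht : t = b ⬝ᵥ A⁻¹.mulVec 1)
    (hu : u = b ⬝ᵥ A⁻¹.mulVec b)
    (γ : Fin n → ℝ) (hγ : γ = V • (1 : Fin n → ℝ) + ε • b)
    (C : Matrix (Fin n) (Fin n) ℝ)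
    (hC : C = ε ^ 2 • A + vecMulVec γ (1 : Fin n → ℝ) + ε • vecMulVec (1 : Fin n → ℝ) b)
    (Δ : ℝ) (hΔ : Δ = s * (V - u) + (ε + t) ^ 2)
    (hCinv : IsUnit C.det) (hΔ0 : Δ ≠ 0) :
    γ ⬝ᵥ C⁻¹.mulVec γ = V - ε ^ 2 * (V - u) / Δ := by
  have hAinv_symm : A⁻¹.IsSymm :=
    (conjTranspose_eq_transpose_of_trivial A⁻¹).symm.trans hA.inv.isHermitian.eq
  have ht' : t = 1 ⬝ᵥ A⁻¹ *ᵥ b := ht.trans (dotProduct_mulVec_comm_of_isSymm hAinv_symm b 1)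
  exact gamma_Cinv_gamma_general hA.det_pos.ne'.isUnit hs ht ht' hu hγ hγ hC (sq (ε + t) ▸ hΔ)
    hCinv hΔ0
end

section
/- Let A ∈ ℝ^{n×n} be symmetric positive definite, b ∈ ℝⁿ, and ε, V ∈ ℝ. Set s = 𝟙ᵀA⁻¹𝟙, t = bᵀA⁻¹𝟙, u = bᵀA⁻¹b, γ = V𝟙 + εb, C = ε²A + γ𝟙ᵀ + ε𝟙bᵀ, and Δ = s(V − u) + (ε + t)². Assume C is invertible and Δ ≠ 0. Then 𝟙ᵀC⁻¹γ = 1 − ε(ε + t)/Δ. -/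
/-!
The vector `w = (V - u) • A⁻¹𝟙 + (ε + t) • A⁻¹b` satisfies `C w = Δ • γ` and
`𝟙ᵀw = Δ - ε (ε + t)`. Both are polynomial identities in the scalars, so no division by `ε` occurs;
invertibility of `C` turns them into `Δ (𝟙ᵀC⁻¹γ) = Δ - ε (ε + t)`. With row vectors `f`, `g`
unrelated to the column vectors `a`, `b`, the square in `Δ` splits as `(ε + gᵀA⁻¹a) (ε + fᵀA⁻¹b)`.
-/

open Matrix

lemma dotProduct_mulVec_comm_of_isSymm_s7 {ι R : Type*} [Fintype ι] [CommSemiring R]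
    {A : Matrix ι ι R} (hA : A.IsSymm) (x y : ι → R) :
    x ⬝ᵥ A *ᵥ y = y ⬝ᵥ A *ᵥ x := by
  rw [← dotProduct_transpose_mulVec, hA.eq]

section CommRing

variable {ι R : Type*} [Fintype ι] [CommRing R]

lemma rankTwoUpdate_mulVec_eq_smul {A : Matrix ι ι R} {a b p q : ι → R}
    (hp : A *ᵥ p = a) (hq : A *ᵥ q = b) (f g : ι → R) (ε V : R) :
    (ε ^ 2 • A + vecMulVec (V • a + ε • b) f + ε • vecMulVec a g) *ᵥ
        ((V - g ⬝ᵥ q) • p + (ε + g ⬝ᵥ p) • q) =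
      (f ⬝ᵥ p * (V - g ⬝ᵥ q) + (ε + g ⬝ᵥ p) * (ε + f ⬝ᵥ q)) • (V • a + ε • b) := by
  simp only [mulVec_add, mulVec_smul, add_mulVec, smul_mulVec, vecMulVec_mulVec, op_smul_eq_smul,
    hp, hq]
  module

variable [DecidableEq ι]

lemma mul_dotProduct_inv_mulVec_of_mulVec_eq_smul {C : Matrix ι ι R} (hC : IsUnit C.det)
    {w γ : ι → R} {d : R} (hw : C *ᵥ w = d • γ) (f : ι → R) :
    d * (f ⬝ᵥ C⁻¹ *ᵥ γ) = f ⬝ᵥ w := by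
  rw [← smul_eq_mul, ← dotProduct_smul, ← mulVec_smul, ← hw, mulVec_mulVec,
    nonsing_inv_mul C hC, one_mulVec]

lemma mulVec_inv_mulVec_cancel {A : Matrix ι ι R} (hA : IsUnit A.det) (v : ι → R) :
    A *ᵥ (A⁻¹ *ᵥ v) = v := by
  rw [mulVec_mulVec, mul_nonsing_inv A hA, one_mulVec]

end CommRing

theorem ones_Cinv_gamma_general {ι K : Type*} [Fintype ι] [DecidableEq ι] [Field K]
    (A : Matrix ι ι K) (hA : IsUnit A.det)
    (a b f g : ι → K) (ε V : K)
    (s t t' u : K)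
    (hs : s = f ⬝ᵥ A⁻¹ *ᵥ a)
    (ht : t = g ⬝ᵥ A⁻¹ *ᵥ a)
    (ht' : t' = f ⬝ᵥ A⁻¹ *ᵥ b)
    (hu : u = g ⬝ᵥ A⁻¹ *ᵥ b)
    (γ : ι → K) (hγ : γ = V • a + ε • b)
    (C : Matrix ι ι K) (hC : C = ε ^ 2 • A + vecMulVec γ f + ε • vecMulVec a g)
    (Δ : K) (hΔ : Δ = s * (V - u) + (ε + t) * (ε + t'))
    (hCinv : IsUnit C.det) (hΔ0 : Δ ≠ 0) :
    f ⬝ᵥ C⁻¹ *ᵥ γ = 1 - ε * (ε + t) / Δ := by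
  let w := (V - u) • A⁻¹ *ᵥ a + (ε + t) • A⁻¹ *ᵥ b
  have hCw : C *ᵥ w = Δ • γ := by
    subst hs ht ht' hu hγ hC hΔ
    exact rankTwoUpdate_mulVec_eq_smul (mulVec_inv_mulVec_cancel hA a)
      (mulVec_inv_mulVec_cancel hA b) f g ε V
  have hfw : f ⬝ᵥ w = Δ - ε * (ε + t) := by
    simp only [w, dotProduct_add, dotProduct_smul, smul_eq_mul, ← hs, ← ht', hΔ]
    ring
  rw [← div_self hΔ0, ← sub_div, eq_div_iff hΔ0, mul_comm, ← hfw]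
  exact mul_dotProduct_inv_mulVec_of_mulVec_eq_smul hCinv hCw f

/-- `𝟙ᵀC⁻¹γ = 1 − ε(ε + t)/Δ`. -/
theorem ones_Cinv_gamma {n : ℕ}
    (A : Matrix (Fin n) (Fin n) ℝ) (hA : A.PosDef)
    (b : Fin n → ℝ) (ε V : ℝ)
    (s t u : ℝ)
    (hs : s = (1 : Fin n → ℝ) ⬝ᵥ A⁻¹.mulVec 1)
    (ht : t = b ⬝ᵥ A⁻¹.mulVec 1)
    (hu : u = b ⬝ᵥ A⁻¹.mulVec b)
    (γ : Fin n → ℝ) (hγ : γ = V • (1 : Fin n → ℝ) + ε • b)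
    (C : Matrix (Fin n) (Fin n) ℝ)
    (hC : C = ε ^ 2 • A + vecMulVec γ (1 : Fin n → ℝ) + ε • vecMulVec (1 : Fin n → ℝ) b)
    (Δ : ℝ) (hΔ : Δ = s * (V - u) + (ε + t) ^ 2)
    (hCinv : IsUnit C.det) (hΔ0 : Δ ≠ 0) :
    (1 : Fin n → ℝ) ⬝ᵥ C⁻¹.mulVec γ = 1 - ε * (ε + t) / Δ := by
  have ht' := ht.trans
    (dotProduct_mulVec_comm_of_isSymm_s7 (isHermitian_iff_isSymm.mp hA.isHermitian).inv b 1)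
  exact ones_Cinv_gamma_general A hA.det_pos.ne'.isUnit 1 b 1 b ε V s t t u hs ht ht' hu γ hγ C hC
    Δ (by rw [hΔ, sq]) hCinv hΔ0
end

section
/- Let A ∈ ℝ^{n×n} be symmetric positive definite and 𝟙 ∈ ℝⁿ the all-ones vector, and set s = 𝟙ᵀA⁻¹𝟙. Define f on the open set of invertible matrices B ∈ ℝ^{n×n} by f(B) = (𝟙ᵀB⁻¹AB⁻¹𝟙)/(𝟙ᵀB⁻¹𝟙)². Then f(A) = 1/s, f is Fréchet differentiable at A, and its Fréchet derivative at A is the zero linear map: for every H ∈ ℝ^{n×n}, the directional derivative of f at A in direction H is 0. -/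
/-!
In terms of the inverse `x = B⁻¹` the variance is `q x = ℓ (x * A * x) / ℓ x ^ 2` with
`ℓ M = 𝟙ᵀM𝟙` linear. At `x = A⁻¹` the quadratic map `x ↦ x * A * x` has value `A⁻¹` and derivative
`H ↦ A⁻¹ * A * H + H * A * A⁻¹ = 2 • H`, so numerator and denominator of `q` have the values `s`
and `s ^ 2`, and the derivatives `2 • ℓ` and `(2 * s) • ℓ`; the quotient rule gives zero. Since
inversion is differentiable at `A`, the chain rule turns the stationary point `A⁻¹` of `q` into the
stationary point `A` of `B ↦ q B⁻¹`.
-/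

open Matrix

attribute [local instance] Matrix.frobeniusNormedAddCommGroup Matrix.frobeniusNormedSpace

section QuotientRule

variable {𝕜 E F : Type*} [NontriviallyNormedField 𝕜] [NormedAddCommGroup E] [NormedSpace 𝕜 E]
  [NormedField F] [NormedAlgebra 𝕜 F]

lemma hasFDerivAt_div {g h : E → F} {g' h' : E →L[𝕜] F} {x : E} (hg : HasFDerivAt g g' x)
    (hh : HasFDerivAt h h' x) (hx : h x ≠ 0) :
    HasFDerivAt (fun y => g y / h y) ((h x ^ 2)⁻¹ • (h x • g' - g x • h')) x := by
  have hvalue (p q : F) : g x * -((h x)⁻¹ * q * (h x)⁻¹) + (h x)⁻¹ * p =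
      (h x ^ 2)⁻¹ * (h x * p - g x * q) := by
    field_simp
    ring
  simp only [div_eq_mul_inv]
  refine (hg.fun_mul ((hasFDerivAt_inv' hx).comp x hh)).congr_fderiv ?_
  ext v
  exact hvalue (g' v) (h' v)

end QuotientRule

section VarianceRatio

variable {𝕜 R F : Type*} [NontriviallyNormedField 𝕜] [NormedRing R] [NormedAlgebra 𝕜 R]
  [NormedField F] [NormedAlgebra 𝕜 F]

/-- The true variance of the plug-in minimal variance aggregate as a function of the inverse
`x = B⁻¹` of the estimate `B`, with the functional `M ↦ 𝟙ᵀM𝟙` replaced by an arbitrary `ℓ`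
and the matrices by an arbitrary normed algebra. -/
def varianceRatio (ℓ : R →L[𝕜] F) (a x : R) : F :=
  ℓ (x * a * x) / ℓ x ^ 2

lemma varianceRatio_of_mul_eq_one (ℓ : R →L[𝕜] F) {a c : R} (hca : c * a = 1) :
    varianceRatio ℓ a c = 1 / ℓ c := by
  rw [varianceRatio, hca, one_mul, sq, div_self_mul_self', one_div]

lemma hasFDerivAt_mul_mul_self_of_mul_eq_one {a c : R} (hca : c * a = 1) (hac : a * c = 1) :
    HasFDerivAt (fun x => x * a * x) ((2 : 𝕜) • ContinuousLinearMap.id 𝕜 R) c := by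
  have hid := hasFDerivAt_id (𝕜 := 𝕜) c
  refine ((hid.mul_const' a).mul' hid).congr_fderiv ?_
  ext v
  simp [hca, hac, mul_assoc, two_smul]

lemma hasFDerivAt_varianceRatio_of_mul_eq_one (ℓ : R →L[𝕜] F) {a c : R} (hca : c * a = 1)
    (hac : a * c = 1) (hc : ℓ c ≠ 0) :
    HasFDerivAt (varianceRatio ℓ a) (0 : R →L[𝕜] F) c := by
  have hnum : HasFDerivAt (fun x => ℓ (x * a * x)) ((2 : F) • ℓ) c := by
    refine (ℓ.hasFDerivAt.comp c (hasFDerivAt_mul_mul_self_of_mul_eq_one hca hac)).congr_fderiv ?_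
    ext v
    simp [two_smul, two_mul]
  have hden : HasFDerivAt (fun x => ℓ x ^ 2) ((2 * ℓ c) • ℓ) c := by
    simpa using ℓ.hasFDerivAt.pow 2
  have hcancel (v : R) : ℓ c ^ 2 * (2 * ℓ v) - ℓ (c * a * c) * (2 * ℓ c * ℓ v) = 0 := by
    rw [hca, one_mul]
    ring
  refine (hasFDerivAt_div hnum hden (pow_ne_zero 2 hc)).congr_fderiv ?_
  ext v
  exact mul_eq_zero_of_right _ (hcancel v)

open scoped Ring in
theorem mva_first_order_stability_general [HasSummableGeomSeries R] (ℓ : R →L[𝕜] F) {a : R}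
    (ha : IsUnit a) (hℓ : ℓ a⁻¹ʳ ≠ 0) :
    varianceRatio ℓ a a⁻¹ʳ = 1 / ℓ a⁻¹ʳ ∧
      HasFDerivAt (fun b => varianceRatio ℓ a b⁻¹ʳ) (0 : R →L[𝕜] F) a := by
  have hca : a⁻¹ʳ * a = 1 := Ring.inverse_mul_cancel a ha
  have hac : a * a⁻¹ʳ = 1 := Ring.mul_inverse_cancel a ha
  refine ⟨varianceRatio_of_mul_eq_one ℓ hca, ?_⟩
  have hinv := (differentiableAt_inverse (𝕜 := 𝕜) ha).hasFDerivAt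
  exact ((hasFDerivAt_varianceRatio_of_mul_eq_one ℓ hca hac hℓ).comp a hinv).congr_fderiv
    (ContinuousLinearMap.zero_comp _)

end VarianceRatio

/-- The functional `M ↦ uᵀMv` on matrices. -/
noncomputable def dotProductMulVecCLM {𝕜 m n : Type*} [NontriviallyNormedField 𝕜]
    [CompleteSpace 𝕜] [Fintype m] [Fintype n] (u : m → 𝕜) (v : n → 𝕜) : Matrix m n 𝕜 →L[𝕜] 𝕜 :=
  (dotProductBilin 𝕜 𝕜 u ∘ₗ (mulVecBilin 𝕜 𝕜).flip v).toContinuousLinearMap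

attribute [local instance] Matrix.frobeniusNormedRing Matrix.frobeniusNormedAlgebra

/-- The true variance `f(B) = (𝟙ᵀB⁻¹AB⁻¹𝟙)/(𝟙ᵀB⁻¹𝟙)²` of the
plug-in minimal variance aggregate satisfies `f(A) = 1/s` and is Fréchet
differentiable at `A` with zero derivative (so every directional derivative at `A`
vanishes). -/
theorem mva_first_order_stability {n : ℕ}
    (A : Matrix (Fin n) (Fin n) ℝ) (hA : A.PosDef)
    (s : ℝ) (hs : s = (1 : Fin n → ℝ) ⬝ᵥ A⁻¹.mulVec 1)
    (f : Matrix (Fin n) (Fin n) ℝ → ℝ)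
    (hf : f = fun B =>
      ((1 : Fin n → ℝ) ⬝ᵥ (B⁻¹ * A * B⁻¹).mulVec 1) /
        ((1 : Fin n → ℝ) ⬝ᵥ B⁻¹.mulVec 1) ^ 2) :
    f A = 1 / s ∧
    HasFDerivAt f (0 : Matrix (Fin n) (Fin n) ℝ →L[ℝ] ℝ) A := by
  subst hs hf
  rcases isEmpty_or_nonempty (Fin n) with _ | _
  · exact ⟨by simp [dotProduct], hasFDerivAt_of_subsingleton _ _⟩
  have : CompleteSpace (Matrix (Fin n) (Fin n) ℝ) := FiniteDimensional.complete ℝ _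
  have hpos : 0 < (1 : Fin n → ℝ) ⬝ᵥ A⁻¹ *ᵥ 1 := by
    simpa using hA.inv.dotProduct_mulVec_pos one_ne_zero
  simp only [nonsing_inv_eq_ringInverse] at hpos ⊢
  exact mva_first_order_stability_general (dotProductMulVecCLM 1 1) hA.isUnit hpos.ne'
end
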